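/- For all positive integers m and n, the set 𝔅(m,n) is a null set for the Haar measure μ on ℒ^{mn}: μ(𝔅(m,n)) = 0. -/

import Mathlib

/-!
Common setup: the field `ℒ = 𝔽((X⁻¹))` of formal Laurent series with coefficients
in a finite field `𝔽` of `k` elements.  We realize `ℒ` as `LaurentSeries 𝔽`
(Hahn series over `ℤ`) in the variable `T = X⁻¹`, so that `X` corresponds to `T⁻¹`
and the polynomial ring `𝔽[X]` corresponds to series supported on nonpositive
exponents.  The absolute value of `x = Σ_{i ≤ N} a_i X^i` (with `a_N ≠ 0`) is
`k^N`, i.e. `k^(-order x)` in terms of the `T`-adic order.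
-/

open scoped Classical ENNReal NNReal
open MeasureTheory

noncomputable section

namespace FSBad

/-- The field `ℒ = 𝔽((X⁻¹))`. -/
abbrev L (𝔽 : Type) [Field 𝔽] : Type := LaurentSeries 𝔽

variable {𝔽 : Type} [Field 𝔽] [Fintype 𝔽]

/-- The absolute value `‖·‖` on `ℒ`: `‖x‖ = k^(deg_X x)`, `‖0‖ = 0`. -/
def lnorm (x : L 𝔽) : ℝ := if x = 0 then 0 else (Fintype.card 𝔽 : ℝ) ^ (-x.order)

/-- Membership in the polynomial ring `𝔽[X] ⊆ ℒ` (polynomials in `X = T⁻¹`). -/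
def IsPoly (x : L 𝔽) : Prop := ∀ i : ℤ, 0 < i → x.coeff i = 0

/-- The height (sup-norm) `‖·‖_∞` on `ℒ^ι`. -/
def vnorm {ι : Type*} (x : ι → L 𝔽) : ℝ := ⨆ i, lnorm (x i)

/-- The closed ball in `ℒ^ι` with centre `c` and radius `ρ`. -/
def vball {ι : Type*} (c : ι → L 𝔽) (ρ : ℝ) : Set (ι → L 𝔽) :=
  {x | vnorm (fun i => x i - c i) ≤ ρ}

/-- `m × n` matrices over `ℒ`, identified with `ℒ^(mn)`. -/
abbrev Mat (𝔽 : Type) [Field 𝔽] (m n : ℕ) : Type := Matrix (Fin m) (Fin n) (L 𝔽)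

/-- The height of a matrix, i.e. the sup-norm on `ℒ^(mn)`. -/
def mnorm {m n : ℕ} (A : Mat 𝔽 m n) : ℝ := ⨆ p : Fin m × Fin n, lnorm (A p.1 p.2)

/-- The closed ball in `ℒ^(mn)` with centre `c` and radius `ρ`. -/
def mball {m n : ℕ} (c : Mat 𝔽 m n) (ρ : ℝ) : Set (Mat 𝔽 m n) :=
  {A | mnorm (A - c) ≤ ρ}

/-- The distance `⟨x⟩` from `x ∈ ℒ^h` to the polynomial lattice `𝔽[X]^h`. -/
def latDist {h : ℕ} (x : Fin h → L 𝔽) : ℝ :=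
  sInf {r : ℝ | ∃ p : Fin h → L 𝔽, (∀ i, IsPoly (p i)) ∧ r = vnorm (fun i => x i - p i)}

/-- The set `𝔅(m,n)` of badly approximable systems of `m` linear forms in `n`
variables over `ℒ`. -/
def Bad (𝔽 : Type) [Field 𝔽] [Fintype 𝔽] (m n : ℕ) : Set (Mat 𝔽 m n) :=
  {A | ∃ K : ℝ, 0 < K ∧ ∀ q : Fin m → L 𝔽, (∀ i, IsPoly (q i)) → q ≠ 0 →
    latDist (Matrix.vecMul q A) ^ n > K / vnorm q ^ m}

/-- The Hausdorff `s`-measure of `E ⊆ ℒ^(mn)`, defined through countable covers by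
balls of radii `< δ`, letting `δ → 0` (the infimum over `δ`-covers is nonincreasing
in `δ`, so the limit is the supremum over `δ > 0`). -/
def hMeasure {m n : ℕ} (s : ℝ) (E : Set (Mat 𝔽 m n)) : ℝ≥0∞ :=
  ⨆ (δ : ℝ) (_ : 0 < δ),
    ⨅ (c : ℕ → Mat 𝔽 m n) (ρ : ℕ → ℝ) (_ : ∀ i, 0 < ρ i ∧ ρ i < δ)
      (_ : E ⊆ ⋃ i, mball (c i) (ρ i)), ∑' i, ENNReal.ofReal (ρ i ^ s)

/-- The Hausdorff dimension of `E ⊆ ℒ^(mn)`. -/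
def hdim {m n : ℕ} (E : Set (Mat 𝔽 m n)) : ℝ :=
  sInf {s : ℝ | 0 ≤ s ∧ hMeasure s E = 0}

/-! ### Schmidt `(α,β)`-games on `ℒ^(mn)` -/

/-- A formal ball: an element of `Ω = ℒ^(mn) × ℝ`. -/
structure FBall (𝔽 : Type) [Field 𝔽] (m n : ℕ) where
  /-- centre -/
  c : Mat 𝔽 m n
  /-- radius -/
  r : ℝ

/-- Formal inclusion of formal balls: `(c₁,ρ₁) ⊆ (c₂,ρ₂)` iff `ρ₁ + ‖c₁ - c₂‖_∞ ≤ ρ₂`. -/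
def FBall.ssub {m n : ℕ} (B₁ B₂ : FBall 𝔽 m n) : Prop :=
  B₁.r + mnorm (B₁.c - B₂.c) ≤ B₂.r

/-- The subset of `ℒ^(mn)` determined by a formal ball. -/
def FBall.toSet {m n : ℕ} (B : FBall 𝔽 m n) : Set (Mat 𝔽 m n) := mball B.c B.r

/-- A strategy for White: given the balls `B₁, …, B_{i+1}` chosen by Black so far,
produce White's next ball. -/
abbrev Strategy (𝔽 : Type) [Field 𝔽] (m n : ℕ) : Type :=
  (i : ℕ) → (Fin (i + 1) → FBall 𝔽 m n) → FBall 𝔽 m n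

/-- White's move at stage `i` when following strategy `str` against Black's balls `B`. -/
def wMove {m n : ℕ} (str : Strategy 𝔽 m n) (B : ℕ → FBall 𝔽 m n) (i : ℕ) : FBall 𝔽 m n :=
  str i fun j => B j.1

/-- Black's move `B_{j+2}` is legal (for parameter `β`): it is a formal subset of
White's ball `W_{j+1}` and has radius `β · ρ(W_{j+1})`. -/
def BlackOk {m n : ℕ} (β : ℝ) (str : Strategy 𝔽 m n) (B : ℕ → FBall 𝔽 m n) (j : ℕ) : Prop :=
  (B (j + 1)).ssub (wMove str B j) ∧ (B (j + 1)).r = β * (wMove str B j).r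

/-- White's move `W_{i+1}` is legal (for parameter `α`): it is a formal subset of
Black's ball `B_{i+1}` and has radius `α · ρ(B_{i+1})`. -/
def WhiteOk {m n : ℕ} (α : ℝ) (str : Strategy 𝔽 m n) (B : ℕ → FBall 𝔽 m n) (i : ℕ) : Prop :=
  (wMove str B i).ssub (B i) ∧ (wMove str B i).r = α * (B i).r

/-- `str` is a winning strategy for White in the `(α,β;S)`-game: against any
sequence of Black balls, White's moves are legal as long as Black has played
legally so far, and if the whole play is legal then the intersection of the
chosen balls is contained in `S`. -/
def WinningStrategy {m n : ℕ} (α β : ℝ) (S : Set (Mat 𝔽 m n)) (str : Strategy 𝔽 m n) : Prop :=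
  ∀ B : ℕ → FBall 𝔽 m n, 0 ≤ (B 0).r →
    (∀ i, (∀ j < i, BlackOk β str B j) → WhiteOk α str B i) ∧
    ((∀ j, BlackOk β str B j) → (⋂ i, (B i).toSet) ⊆ S)

/-- `S` is `(α,β)`-winning. -/
def IsWinningAB {m n : ℕ} (α β : ℝ) (S : Set (Mat 𝔽 m n)) : Prop :=
  ∃ str : Strategy 𝔽 m n, WinningStrategy α β S str

/-- `S` is `α`-winning. -/
def IsWinningA {m n : ℕ} (α : ℝ) (S : Set (Mat 𝔽 m n)) : Prop :=
  ∀ β : ℝ, 0 < β → β < 1 → IsWinningAB α β S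

/-- The winning dimension of `S` (a supremum of a set of reals, which is `0` by
convention when the set is empty). -/
def windim {m n : ℕ} (S : Set (Mat 𝔽 m n)) : ℝ :=
  sSup {α : ℝ | 0 < α ∧ α < 1 ∧ IsWinningA α S}

/-! ### The matrices `Ā`, `Ā^*` and the quantities `M_v`, `D_v`, `∇D_v` -/

/-- `Ā = [[A, I_m], [I_n, 0]]`. Rows are indexed by `Fin m ⊕ Fin n`
(coordinates `q_1, …, q_{m+n}`), columns by `Fin n ⊕ Fin m`. -/
def Abar {m n : ℕ} (A : Mat 𝔽 m n) : Matrix (Fin m ⊕ Fin n) (Fin n ⊕ Fin m) (L 𝔽) :=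
  Matrix.fromBlocks A 1 1 0

/-- `Ā^* = [[Aᵀ, I_n], [I_m, 0]]`. Rows are indexed by `Fin n ⊕ Fin m`,
columns by `Fin m ⊕ Fin n`. -/
def AbarStar {m n : ℕ} (A : Mat 𝔽 m n) : Matrix (Fin n ⊕ Fin m) (Fin m ⊕ Fin n) (L 𝔽) :=
  Matrix.fromBlocks A.transpose 1 1 0

/-- The standard bilinear form `x·y = Σ_i x_i y_i` on `ℒ^ι`. -/
def dotL {ι : Type*} [Fintype ι] (x y : ι → L 𝔽) : L 𝔽 := ∑ i, x i * y i

/-- Strictly increasing `v`-tuples `1 ≤ i_1 < ⋯ < i_v ≤ m`. -/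
def IncTuple (v m : ℕ) : Type := {f : Fin v → Fin m // StrictMono f}

/-- The vector `M_v(A) ∈ ℒ^(C(m,v)²)` of the determinants
`det (y_{i_r} · C_{j_s}(Ā^*))_{1 ≤ r,s ≤ v}` over all strictly increasing index
tuples.  (For `v = 0` every coordinate is an empty determinant, i.e. `1`.) -/
def MvVec {m n : ℕ} (y : Fin m → (Fin n ⊕ Fin m → L 𝔽)) (v : ℕ) (A : Mat 𝔽 m n) :
    IncTuple v m × IncTuple v m → L 𝔽 := fun p =>
  Matrix.det (Matrix.of fun r s : Fin v =>
    dotL (y (p.1.1 r)) fun t => AbarStar A t (Sum.inl (p.2.1 s)))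

/-- `‖M_v(A)‖_∞`. -/
def MvNorm {m n : ℕ} (y : Fin m → (Fin n ⊕ Fin m → L 𝔽)) (v : ℕ) (A : Mat 𝔽 m n) : ℝ :=
  vnorm (MvVec y v A)

/-- `M_v(K) = max_{A ∈ K} ‖M_v(A)‖_∞` for `K ⊆ ℒ^(mn)`. -/
def MvSet {m n : ℕ} (y : Fin m → (Fin n ⊕ Fin m → L 𝔽)) (v : ℕ) (K : Set (Mat 𝔽 m n)) : ℝ :=
  sSup {r : ℝ | ∃ A ∈ K, r = MvNorm y v A}

/-- `D_v(A) = det (y_h · C_l(Ā^*))_{1 ≤ h,l ≤ v}`. -/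
def Dv {m n : ℕ} (y : Fin m → (Fin n ⊕ Fin m → L 𝔽)) (v : ℕ) (hv : v ≤ m)
    (A : Mat 𝔽 m n) : L 𝔽 :=
  Matrix.det (Matrix.of fun h l : Fin v =>
    dotL (y (Fin.castLE hv h)) fun t => AbarStar A t (Sum.inl (Fin.castLE hv l)))

/-- The discrete gradient `∇D_v(A) ∈ ℒ^(mn)`, with coordinates
`D_v(A + E_{ij}) - D_v(A)`. -/
def gradDv {m n : ℕ} (y : Fin m → (Fin n ⊕ Fin m → L 𝔽)) (v : ℕ) (hv : v ≤ m)
    (A : Mat 𝔽 m n) : Fin m × Fin n → L 𝔽 := fun p =>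
  Dv y v hv (A + Matrix.single p.1 p.2 1) - Dv y v hv A

/-- `y_1, …, y_m ∈ ℒ^(m+n)` form an orthonormal system: `y_h · y_{h'} = δ_{h h'}`
and `‖t_1 y_1 + ⋯ + t_m y_m‖_∞ = max_h ‖t_h‖`. -/
def OrthoSystem {m n : ℕ} (y : Fin m → (Fin n ⊕ Fin m → L 𝔽)) : Prop :=
  (∀ h h', dotL (y h) (y h') = if h = h' then 1 else 0) ∧
  (∀ t : Fin m → L 𝔽, vnorm (fun r => ∑ h, t h * y h r) = ⨆ h, lnorm (t h))

/-! ### Distance functions, parallelepipeds and successive minima -/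

/-- The `j`-th successive minimum of a distance function `F` on `ℒ^N`: the infimum
of all `λ > 0` such that `{F < λ}` contains `j` linearly independent points of
`𝔽[X]^N`. -/
def succMin {N : ℕ} (F : (Fin N → L 𝔽) → ℝ) (j : ℕ) : ℝ :=
  sInf {lam : ℝ | 0 < lam ∧ ∃ v : Fin j → (Fin N → L 𝔽),
    (∀ r, ∀ i, IsPoly (v r i)) ∧ LinearIndependent (L 𝔽) v ∧ ∀ r, F (v r) < lam}

/-- The distance function `F_A(x) = max_j c_j⁻¹ ‖Σ_i x_i a_{ij}‖`. -/
def FA {N : ℕ} (A : Matrix (Fin N) (Fin N) (L 𝔽)) (c : Fin N → ℝ)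
    (x : Fin N → L 𝔽) : ℝ :=
  ⨆ j, (c j)⁻¹ * lnorm (∑ i, x i * A i j)

/-- The parallelepiped `P_A(λ) = {x ∈ ℒ^N : F_A(x) < λ}`. -/
def PA {N : ℕ} (A : Matrix (Fin N) (Fin N) (L 𝔽)) (c : Fin N → ℝ) (lam : ℝ) :
    Set (Fin N → L 𝔽) := {x | FA A c x < lam}

/-- The polar distance function `F_A^*(y) = sup_{x ≠ 0} ‖x·y‖ / F_A(x)`. -/
def FAstar {N : ℕ} (A : Matrix (Fin N) (Fin N) (L 𝔽)) (c : Fin N → ℝ)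
    (y : Fin N → L 𝔽) : ℝ :=
  ⨆ x : {x : Fin N → L 𝔽 // x ≠ 0}, lnorm (dotL x.1 y) / FA A c x.1

/-! ### Haar measure, characterized by translation invariance and normalization -/

/-- The Borel σ-algebra on `ℒ^N`, generated by the balls. -/
def vecSigma (𝔽 : Type) [Field 𝔽] [Fintype 𝔽] (N : ℕ) : MeasurableSpace (Fin N → L 𝔽) :=
  MeasurableSpace.generateFrom {s | ∃ c ρ, (0 : ℝ) < ρ ∧ s = vball c ρ}

/-- `μ` is the Haar measure on `ℒ^N`: translation invariant and normalized so that
the unit ball `I^N` has measure `1` (these properties determine it uniquely). -/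
def IsHaarVec {N : ℕ} (μ : @Measure (Fin N → L 𝔽) (vecSigma 𝔽 N)) : Prop :=
  (∀ (v : Fin N → L 𝔽) (s : Set (Fin N → L 𝔽)), μ ((fun x => x + v) ⁻¹' s) = μ s) ∧
  μ {x | ∀ i, lnorm (x i) < 1} = 1

/-- The Borel σ-algebra on `ℒ^(mn)`, generated by the balls. -/
def matSigma (𝔽 : Type) [Field 𝔽] [Fintype 𝔽] (m n : ℕ) : MeasurableSpace (Mat 𝔽 m n) :=
  MeasurableSpace.generateFrom {s | ∃ c ρ, (0 : ℝ) < ρ ∧ s = mball c ρ}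

/-- `μ` is the Haar measure on `ℒ^(mn)`: translation invariant and normalized so
that the unit ball `I^(mn)` has measure `1`. -/
def IsHaarMat {m n : ℕ} (μ : @Measure (Mat 𝔽 m n) (matSigma 𝔽 m n)) : Prop :=
  (∀ (v : Mat 𝔽 m n) (s : Set (Mat 𝔽 m n)), μ ((fun x => x + v) ⁻¹' s) = μ s) ∧
  μ {A | ∀ i j, lnorm (A i j) < 1} = 1

/-! ### The constants of Section 3 -/

/-- `τ = m/(m+n)`. -/
def tau (m n : ℕ) : ℝ := m / (m + n)

/-- `δ = R^(-m(m+n)²)`. -/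
def del (R : ℝ) (m n : ℕ) : ℝ := R ^ (-((m : ℝ) * ((m : ℝ) + n) ^ 2))

/-- `δ* = R^(-n(m+n)²)`. -/
def delStar (R : ℝ) (m n : ℕ) : ℝ := R ^ (-((n : ℝ) * ((m : ℝ) + n) ^ 2))

/-! ### Proof -/

def G (t : ℤ) (x : L 𝔽) : Prop := ∀ l < t, x.coeff l = 0

lemma G_iff (t : ℤ) (x : L 𝔽) : G t x ↔ (t : WithTop ℤ) ≤ x.orderTop := by
  rw [HahnSeries.le_orderTop_iff_forall]
  simp [G]

lemma G_mono {s t : ℤ} (h : s ≤ t) {x : L 𝔽} (hx : G t x) : G s x :=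
  fun l hl => hx l (lt_of_lt_of_le hl h)

lemma G_add {t : ℤ} {x y : L 𝔽} (hx : G t x) (hy : G t y) : G t (x + y) := by
  intro l hl; simp [hx l hl, hy l hl]

lemma G_sub {t : ℤ} {x y : L 𝔽} (hx : G t x) (hy : G t y) : G t (x - y) := by
  intro l hl; simp [hx l hl, hy l hl]

lemma G_zero {t : ℤ} : G t (0 : L 𝔽) := by intro l hl; simp

lemma G_sum {ι : Type*} (s : Finset ι) {t : ℤ} {x : ι → L 𝔽} (h : ∀ i ∈ s, G t (x i)) :
    G t (∑ i ∈ s, x i) := by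
  induction s using Finset.induction_on with
  | empty => simpa using G_zero
  | insert a s ha ih =>
    rw [Finset.sum_insert ha]
    exact G_add (h _ (Finset.mem_insert_self _ _))
      (ih fun i hi => h i (Finset.mem_insert_of_mem hi))

lemma G_mul {s t : ℤ} {x y : L 𝔽} (hx : G s x) (hy : G t y) : G (s + t) (x * y) := by
  rw [G_iff] at *
  refine le_trans ?_ HahnSeries.orderTop_add_le_mul
  push_cast
  exact add_le_add hx hy

lemma G_div {t : ℤ} {x q : L 𝔽} (hx : G t x) (hq : q ≠ 0) : G (t - q.order) (x / q) := by
  by_cases h0 : x = 0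
  · subst h0; simpa using G_zero
  have h1 : x / q ≠ 0 := div_ne_zero h0 hq
  have h2 : (x / q) * q = x := div_mul_cancel₀ _ hq
  have h3 := HahnSeries.order_mul h1 hq
  rw [h2] at h3
  have h4 : t ≤ x.order := (HahnSeries.le_order_iff_forall h0).2 hx
  intro l hl
  apply HahnSeries.coeff_eq_zero_of_lt_order
  omega

lemma one_lt_k : (1 : ℝ) < Fintype.card 𝔽 := by
  exact_mod_cast Fintype.one_lt_card

lemma lnorm_le_iff (t : ℤ) (x : L 𝔽) : lnorm x ≤ (Fintype.card 𝔽 : ℝ) ^ (-t) ↔ G t x := by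
  have hk := one_lt_k (𝔽 := 𝔽)
  unfold lnorm
  split_ifs with h
  · subst h
    simp only [G_zero, iff_true]
    positivity
  · rw [zpow_le_zpow_iff_right₀ hk, neg_le_neg_iff]
    exact HahnSeries.le_order_iff_forall h

lemma lnorm_lt_one_iff (x : L 𝔽) : lnorm x < 1 ↔ G 1 x := by
  have hk := one_lt_k (𝔽 := 𝔽)
  unfold lnorm
  split_ifs with h
  · subst h
    simp [G_zero]
  · rw [zpow_lt_one_iff_right₀ hk]
    rw [show -x.order < 0 ↔ 1 ≤ x.order by omega]
    exact HahnSeries.le_order_iff_forall h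

lemma lnorm_nonneg (x : L 𝔽) : 0 ≤ lnorm x := by
  unfold lnorm
  split_ifs <;> positivity

lemma vnorm_le_iff {ι : Type*} [Finite ι] [Nonempty ι] (t : ℤ) (x : ι → L 𝔽) :
    vnorm x ≤ (Fintype.card 𝔽 : ℝ) ^ (-t) ↔ ∀ i, G t (x i) := by
  unfold vnorm
  rw [ciSup_le_iff (Set.finite_range _).bddAbove]
  simp only [lnorm_le_iff]

def Ball {m n : ℕ} (c : Mat 𝔽 m n) (t : ℤ) : Set (Mat 𝔽 m n) := {A | ∀ i j, G t (A i j - c i j)}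

lemma Ball_eq {m n : ℕ} (hm : 0 < m) (hn : 0 < n) (c : Mat 𝔽 m n) (t : ℤ) :
    Ball c t = mball c ((Fintype.card 𝔽 : ℝ) ^ (-t)) := by
  haveI : Nonempty (Fin m × Fin n) := ⟨(⟨0, hm⟩, ⟨0, hn⟩)⟩
  ext A
  have := vnorm_le_iff (𝔽 := 𝔽) t (fun p : Fin m × Fin n => (A - c) p.1 p.2)
  simp only [Ball, mball, mnorm, Set.mem_ofPred_eq]
  unfold vnorm at this
  rw [this]
  simp

/-- digits -/
def dig (t : ℤ) (s : ℕ) (w : Fin s → 𝔽) (l : ℤ) : 𝔽 :=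
  if h : t ≤ l ∧ l < t + s then w ⟨(l - t).toNat, by omega⟩ else 0

lemma dig_bdd (t : ℤ) (s : ℕ) (w : Fin s → 𝔽) : BddBelow (Function.support (dig t s w)) := by
  refine ⟨t, ?_⟩
  intro l hl
  by_contra h
  apply hl
  unfold dig
  rw [dif_neg (by omega)]

def emb (t : ℤ) (s : ℕ) : (Fin s → 𝔽) →ₗ[𝔽] L 𝔽 where
  toFun w := HahnSeries.ofSuppBddBelow (dig t s w) (dig_bdd t s w)
  map_add' w w' := by
    ext l
    rw [HahnSeries.coeff_add, HahnSeries.coeff_ofSuppBddBelow, HahnSeries.coeff_ofSuppBddBelow,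
      HahnSeries.coeff_ofSuppBddBelow]
    unfold dig; split_ifs <;> simp
  map_smul' r w := by
    ext l
    rw [HahnSeries.coeff_smul, HahnSeries.coeff_ofSuppBddBelow, HahnSeries.coeff_ofSuppBddBelow]
    unfold dig; split_ifs <;> simp

lemma emb_coeff (t : ℤ) (s : ℕ) (w : Fin s → 𝔽) (l : ℤ) : (emb t s w).coeff l =
    if h : t ≤ l ∧ l < t + s then w ⟨(l - t).toNat, by omega⟩ else 0 := by
  change (HahnSeries.ofSuppBddBelow (dig t s w) (dig_bdd t s w)).coeff l = _
  rw [HahnSeries.coeff_ofSuppBddBelow]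
  rfl

lemma emb_coeff' (t : ℤ) (s : ℕ) (w : Fin s → 𝔽) (i : Fin s) :
    (emb t s w).coeff (t + i) = w i := by
  rw [emb_coeff, dif_pos (by omega)]
  congr 1; ext; simp

lemma emb_G (t : ℤ) (s : ℕ) (w : Fin s → 𝔽) : G t (emb t s w) := by
  intro l hl
  rw [emb_coeff, dif_neg (by omega)]

/-- matrix digits -/
def memb {m n : ℕ} (t : ℤ) (s : ℕ) (w : Fin m → Fin n → Fin s → 𝔽) : Mat 𝔽 m n :=
  fun i j => emb t s (w i j)

lemma mem_sub {m n : ℕ} (c : Mat 𝔽 m n) (t : ℤ) (s : ℕ) (w : Fin m → Fin n → Fin s → 𝔽)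
    (A : Mat 𝔽 m n) : A ∈ Ball (c + memb t s w) (t + s) ↔
      A ∈ Ball c t ∧ w = fun i j (l : Fin s) => (A i j - c i j).coeff (t + l) := by
  constructor
  · intro h
    refine ⟨fun i j l hl => ?_, ?_⟩
    · have h1 := h i j l (by omega)
      have h2 := emb_G t s (w i j) l hl
      simp [memb] at h1 ⊢
      rw [h2] at h1; simpa using h1
    · funext i j l
      have h1 := h i j (t + l) (by omega)
      simp [memb, emb_coeff'] at h1 ⊢
      linear_combination -h1
  · rintro ⟨h, rfl⟩ i j l hl
    by_cases hlt : l < t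
    · have h1 := h i j l hlt
      simp [memb, emb_coeff] at h1 ⊢
      rw [if_neg (by omega)]; linear_combination h1
    · have : ∃ r : Fin s, l = t + r := ⟨⟨(l - t).toNat, by omega⟩, by simp; omega⟩
      obtain ⟨r, rfl⟩ := this
      simp only [memb, HahnSeries.coeff_sub, Matrix.add_apply, HahnSeries.coeff_add, emb_coeff']
      ring

lemma Ball_union {m n : ℕ} (c : Mat 𝔽 m n) (t : ℤ) (s : ℕ) :
    Ball c t = ⋃ w : Fin m → Fin n → Fin s → 𝔽, Ball (c + memb t s w) (t + s) := by
  ext A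
  simp [mem_sub]

lemma Ball_disj {m n : ℕ} (c : Mat 𝔽 m n) (t : ℤ) (s : ℕ) :
    Pairwise (Function.onFun Disjoint fun w : Fin m → Fin n → Fin s → 𝔽 =>
      Ball (c + memb t s w) (t + s)) := by
  intro w w' hw
  rw [Function.onFun, Set.disjoint_left]
  intro A h h'
  rw [mem_sub] at h h'
  exact hw (h.2.trans h'.2.symm)

/-- Dirichlet -/
lemma dirichlet {m n : ℕ} (hm : 0 < m) (A : Mat 𝔽 m n) (u : ℕ) :
    ∃ q : Fin m → L 𝔽, (∀ i, IsPoly (q i)) ∧ q ≠ 0 ∧ (∀ i, G (-(n * u : ℤ)) (q i)) ∧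
      ∃ p : Fin n → L 𝔽, (∀ j, IsPoly (p j)) ∧
        ∀ j, G (m * u + 1) (Matrix.vecMul q A j - p j) := by
  let f : (Fin m → Fin (n * u + 1) → 𝔽) →ₗ[𝔽] (Fin n → Fin (m * u) → 𝔽) :=
    { toFun := fun w j l => (Matrix.vecMul (fun i => emb (-(n * u : ℤ)) (n * u + 1) (w i)) A j).coeff (1 + l)
      map_add' := by
        intro w w'; funext j l
        simp [Matrix.vecMul, dotProduct, add_mul, Finset.sum_add_distrib]
      map_smul' := by
        intro r w; funext j l
        simp [Matrix.vecMul, dotProduct, Finset.mul_sum]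
        refine Finset.sum_congr rfl fun i _ => ?_
        rw [← HahnSeries.single_zero_mul_eq_smul, mul_assoc, HahnSeries.single_zero_mul_eq_smul,
          HahnSeries.coeff_smul, smul_eq_mul] }
  have hk : LinearMap.ker f ≠ ⊥ := by
    apply LinearMap.ker_ne_bot_of_finrank_lt
    simp [Module.finrank_pi_fintype]
    nlinarith
  obtain ⟨w, hw, hw0⟩ := Submodule.exists_mem_ne_zero_of_ne_bot hk
  set q : Fin m → L 𝔽 := fun i => emb (-(n * u : ℤ)) (n * u + 1) (w i) with hq
  refine ⟨q, ?_, ?_, fun i => emb_G _ _ _,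
    fun j => HahnSeries.truncLT 1 (Matrix.vecMul q A j), ?_, ?_⟩
  · intro i l hl
    simp only [hq]
    rw [emb_coeff, dif_neg]
    push_cast
    omega
  · intro h
    apply hw0
    funext i l
    have := congrArg (fun x : L 𝔽 => x.coeff (-(n * u : ℤ) + l)) (congrFun h i)
    simp only [hq, emb_coeff'] at this
    simpa using this
  · intro j l hl
    rw [HahnSeries.coeff_truncLT_of_le]
    omega
  · intro j l hl
    rw [HahnSeries.coeff_sub]
    by_cases h : l < 1
    · rw [HahnSeries.coeff_truncLT_of_lt h, sub_self]
    · rw [HahnSeries.coeff_truncLT_of_le (not_lt.1 h), sub_zero]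
      have h1 : ∃ r : Fin (m * u), l = 1 + r :=
        ⟨⟨(l - 1).toNat, by zify; omega⟩, by simp; omega⟩
      obtain ⟨r, rfl⟩ := h1
      exact congrFun (congrFun (LinearMap.mem_ker.1 hw) j) r

def E (𝔽 : Type) [Field 𝔽] (m n κ : ℕ) : Set (Mat 𝔽 m n) :=
  {A | ∀ q : Fin m → L 𝔽, (∀ i, IsPoly (q i)) → q ≠ 0 → ∀ p : Fin n → L 𝔽, (∀ j, IsPoly (p j)) →
    ∀ a b : ℤ, (∀ i, G (-a) (q i)) → (∀ j, G b (Matrix.vecMul q A j - p j)) →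
      n * b < κ + m * a}

lemma porous {m n κ : ℕ} (hm : 0 < m) (hn : 0 < n) (A : Mat 𝔽 m n) (hA : A ∈ E 𝔽 m n κ)
    (t : ℤ) (ht : 0 ≤ t) :
    ∃ A' ∈ Ball A t, ∀ B ∈ Ball A' (t + (2 * κ + m + n : ℕ)), B ∉ E 𝔽 m n κ := by
  obtain ⟨u, hu1, hu2⟩ : ∃ u : ℕ, t + κ ≤ (m + n) * u ∧ ((m + n) * u : ℤ) ≤ t + κ + m + n := by
    obtain ⟨t, rfl⟩ := Int.eq_ofNat_of_zero_le ht
    refine ⟨(t + κ) / (m + n) + 1, ?_, ?_⟩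
    · have := Nat.lt_div_mul_add (a := t + κ) (b := m + n) (by omega)
      zify at this
      push_cast
      linarith
    · have := Nat.div_mul_le_self (t + κ) (m + n)
      zify at this
      push_cast
      linarith
  obtain ⟨q, hq, hq0, hqG, p, hp, hpG⟩ := dirichlet hm A u
  have hne : (Finset.univ.filter fun i => q i ≠ 0).Nonempty := by
    obtain ⟨i, hi⟩ := Function.ne_iff.1 hq0
    exact ⟨i, by simpa using hi⟩
  obtain ⟨i0, hi0, hmin⟩ := Finset.exists_min_image _ (fun i => (q i).order) hne
  have hqi0 : q i0 ≠ 0 := by simpa using hi0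
  obtain ⟨a, ha⟩ : ∃ a : ℤ, (q i0).order = -a := ⟨-(q i0).order, by ring⟩
  have hqa : ∀ i, G (-a) (q i) := by
    intro i
    by_cases h : q i = 0
    · rw [h]; exact G_zero
    · have := hmin i (by simpa using h)
      intro l hl
      apply HahnSeries.coeff_eq_zero_of_lt_order
      omega
  have hau : a ≤ n * u := by
    have := (HahnSeries.le_order_iff_forall hqi0).2 (hqG i0)
    omega
  have h1 := hA q hq hq0 p hp a (m * u + 1) hqa hpG
  have hm' : (1 : ℤ) ≤ m := by exact_mod_cast hm
  have hn' : (1 : ℤ) ≤ n := by exact_mod_cast hn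
  have h2 : n * u - κ ≤ a := by
    by_contra h
    push Not at h
    have h3 : a + κ + 1 ≤ n * u := by omega
    have h4 := mul_le_mul_of_nonneg_left h3 (show (0 : ℤ) ≤ m by omega)
    have h5 : (κ : ℤ) ≤ m * κ := by
      have : (0 : ℤ) ≤ κ := by omega
      nlinarith
    nlinarith
  set δ : Mat 𝔽 m n := fun i j => if i = i0 then (Matrix.vecMul q A j - p j) / q i0 else 0 with hδ
  have hδG : ∀ i j, G t (δ i j) := by
    intro i j
    simp only [hδ]
    split_ifs
    · refine G_mono ?_ (G_div (hpG j) hqi0)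
      rw [ha]
      linarith
    · exact G_zero
  have hqδ : ∀ j, Matrix.vecMul q δ j = Matrix.vecMul q A j - p j := by
    intro j
    simp only [Matrix.vecMul, dotProduct, hδ]
    simp
    field_simp
  refine ⟨A - δ, ?_, ?_⟩
  · intro i j
    have := G_sub (G_zero (𝔽 := 𝔽)) (hδG i j)
    simpa using this
  · intro B hB hBE
    have h6 : ∀ j, G (t + (2 * κ + m + n : ℕ) - a) (Matrix.vecMul q B j - p j) := by
      intro j
      have : Matrix.vecMul q B j - p j = Matrix.vecMul q (B - (A - δ)) j := by
        rw [Matrix.vecMul_sub, Matrix.vecMul_sub, Pi.sub_apply, Pi.sub_apply, hqδ]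
        ring
      rw [this]
      apply G_sum
      intro i _
      have := G_mul (hqa i) (hB i j)
      refine G_mono ?_ this
      omega
    have h7 := hBE q hq hq0 p hp a _ hqa h6
    push_cast at h7
    have h8 : (m + n) * a ≤ (m + n) * (n * u : ℤ) :=
      mul_le_mul_of_nonneg_left hau (by omega)
    have h9 : (n : ℤ) * ((m + n) * u + κ) ≤ n * (t + (2 * κ + m + n)) :=
      mul_le_mul_of_nonneg_left (by linarith) (by omega)
    have h10 : (κ : ℤ) ≤ n * κ := by
      have : (0 : ℤ) ≤ κ := by omega
      nlinarith
    nlinarith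

lemma Bad_sub {m n : ℕ} (hm : 0 < m) (hn : 0 < n) : Bad 𝔽 m n ⊆ ⋃ κ, E 𝔽 m n κ := by
  haveI : Nonempty (Fin m) := ⟨⟨0, hm⟩⟩
  haveI : Nonempty (Fin n) := ⟨⟨0, hn⟩⟩
  rintro A ⟨K, hK, h⟩
  have hk := one_lt_k (𝔽 := 𝔽)
  have hk0 : (0 : ℝ) < Fintype.card 𝔽 := by linarith
  obtain ⟨κ, hκ⟩ := exists_pow_lt_of_lt_one hK (inv_lt_one_of_one_lt₀ hk)
  refine Set.mem_iUnion.2 ⟨κ, ?_⟩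
  intro q hq hq0 p hp a b hqa hb
  have h1 := h q hq hq0
  have h2 : vnorm q ≤ (Fintype.card 𝔽 : ℝ) ^ a := by
    have := (vnorm_le_iff (-a) q).2 hqa
    simpa using this
  have hvn : ∀ {ι : Type} (x : ι → L 𝔽), 0 ≤ vnorm x := fun x =>
    Real.iSup_nonneg fun i => lnorm_nonneg _
  have h0 : 0 < vnorm q := by
    obtain ⟨i, hi⟩ := Function.ne_iff.1 hq0
    have : lnorm (q i) ≤ vnorm q := le_ciSup (f := fun i => lnorm (q i)) (Set.finite_range _).bddAbove i
    refine lt_of_lt_of_le ?_ this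
    have hi' : q i ≠ 0 := hi
    unfold lnorm
    rw [if_neg hi']
    positivity
  have h3 : latDist (Matrix.vecMul q A) ≤ (Fintype.card 𝔽 : ℝ) ^ (-b) := by
    refine le_trans (csInf_le ⟨0, ?_⟩ ⟨p, hp, rfl⟩) ((vnorm_le_iff b _).2 hb)
    rintro _ ⟨p, _, rfl⟩
    exact hvn _
  have h4 : 0 ≤ latDist (Matrix.vecMul q A) := by
    apply Real.sInf_nonneg
    rintro _ ⟨p, _, rfl⟩
    exact hvn _
  have h5 : ((Fintype.card 𝔽 : ℝ) ^ a) ^ m * ((Fintype.card 𝔽 : ℝ) ^ (-b)) ^ n > K := by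
    have h6 : K < latDist (Matrix.vecMul q A) ^ n * vnorm q ^ m :=
      (div_lt_iff₀ (by positivity)).1 h1
    refine lt_of_lt_of_le h6 ?_
    rw [mul_comm]
    gcongr
  have h6 := hκ.trans h5
  rw [inv_pow, ← zpow_natCast, ← zpow_natCast, ← zpow_natCast, ← zpow_neg, ← zpow_mul, ← zpow_mul,
    ← zpow_add₀ hk0.ne', zpow_lt_zpow_iff_right₀ hk] at h6
  linarith

lemma main {m n : ℕ} (hm : 0 < m) (hn : 0 < n)
    (μ : @Measure (Mat 𝔽 m n) (matSigma 𝔽 m n)) (hμ : IsHaarMat μ) (κ : ℕ) :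
    μ (E 𝔽 m n κ) = 0 := by
  letI := matSigma 𝔽 m n
  have hmeas : ∀ (c : Mat 𝔽 m n) t, MeasurableSet (Ball c t) := by
    intro c t
    apply MeasurableSpace.measurableSet_generateFrom
    have hk := one_lt_k (𝔽 := 𝔽)
    exact ⟨c, _, by positivity, Ball_eq hm hn c t⟩
  have htrans : ∀ (c : Mat 𝔽 m n) t, μ (Ball c t) = μ (Ball 0 t) := by
    intro c t
    rw [← hμ.1 (-c) (Ball 0 t)]
    congr 1
    ext A
    simp [Ball, sub_eq_add_neg]
  have hone : μ (Ball 0 1) = 1 := by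
    rw [← hμ.2]
    congr 1
    ext A
    simp [Ball, lnorm_lt_one_iff]
  have hsplit : ∀ (t : ℤ) (s : ℕ), μ (Ball 0 t) =
      (Fintype.card (Fin m → Fin n → Fin s → 𝔽) : ℝ≥0∞) * μ (Ball 0 (t + s)) := by
    intro t s
    rw [Ball_union 0 t s, measure_iUnion (Ball_disj 0 t s) (fun w => hmeas _ _), tsum_fintype]
    simp only [htrans]
    simp
  set s : ℕ := 2 * κ + m + n with hs
  set M : ℕ := Fintype.card (Fin m → Fin n → Fin s → 𝔽) with hM
  have hM0 : 0 < M := Fintype.card_pos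
  set r : ℝ≥0∞ := ((M - 1 : ℕ) : ℝ≥0∞) / M with hr
  have hr1 : r < 1 := by
    rw [hr]
    apply ENNReal.div_lt_of_lt_mul
    rw [one_mul]
    exact_mod_cast Nat.sub_lt hM0 one_pos
  have hind : ∀ j : ℕ, ∀ (t : ℤ) (c : Mat 𝔽 m n), 0 ≤ t →
      μ (E 𝔽 m n κ ∩ Ball c t) ≤ r ^ j * μ (Ball 0 t) := by
    intro j
    induction j with
    | zero =>
      intro t c _
      rw [pow_zero, one_mul, ← htrans c]
      exact measure_mono Set.inter_subset_right
    | succ j ih =>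
      intro t c ht
      by_cases hemp : (E 𝔽 m n κ ∩ Ball c t) = ∅
      · rw [hemp]; simp
      obtain ⟨A, hAE, hAB⟩ := Set.nonempty_iff_ne_empty.2 hemp
      obtain ⟨A', hA', hmiss⟩ := porous hm hn A hAE t ht
      have hA'c : A' ∈ Ball c t := by
        intro i j
        have := G_add (hA' i j) (hAB i j)
        simpa using this
      rw [Ball_union c t s] at hA'c
      obtain ⟨w0, hw0⟩ := Set.mem_iUnion.1 hA'c
      have hsub : E 𝔽 m n κ ∩ Ball c t ⊆ ⋃ w ∈ Finset.univ.erase w0,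
          (E 𝔽 m n κ ∩ Ball (c + memb t s w) (t + s)) := by
        rintro B ⟨hBE, hB⟩
        rw [Ball_union c t s] at hB
        obtain ⟨w, hw⟩ := Set.mem_iUnion.1 hB
        have hne : w ≠ w0 := by
          rintro rfl
          refine hmiss B ?_ hBE
          intro i j
          have := G_sub (hw i j) (hw0 i j)
          rwa [sub_sub_sub_cancel_right] at this
        simp only [Set.mem_iUnion]
        exact ⟨w, by simpa using hne, hBE, hw⟩
      calc μ (E 𝔽 m n κ ∩ Ball c t) ≤ _ := measure_mono hsub
        _ ≤ ∑ w ∈ Finset.univ.erase w0, μ (E 𝔽 m n κ ∩ Ball (c + memb t s w) (t + s)) :=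
          measure_biUnion_finset_le _ _
        _ ≤ ∑ w ∈ Finset.univ.erase w0, r ^ j * μ (Ball 0 (t + s)) :=
          Finset.sum_le_sum fun w _ => ih _ _ (by omega)
        _ = ((M - 1 : ℕ) : ℝ≥0∞) * (r ^ j * μ (Ball 0 (t + s))) := by
          rw [Finset.sum_const, Finset.card_erase_of_mem (Finset.mem_univ _), Finset.card_univ,
            nsmul_eq_mul]
        _ = r ^ (j + 1) * μ (Ball 0 t) := by
          rw [hsplit t s, ← hM, pow_succ]
          have : r * M = ((M - 1 : ℕ) : ℝ≥0∞) :=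
            ENNReal.div_mul_cancel (by exact_mod_cast hM0.ne') (by simp)
          rw [← this]
          ring
  have hzero : ∀ c : Mat 𝔽 m n, μ (E 𝔽 m n κ ∩ Ball c 1) = 0 := by
    intro c
    have h1 : ∀ j : ℕ, μ (E 𝔽 m n κ ∩ Ball c 1) ≤ r ^ j := by
      intro j
      have := hind j 1 c (by norm_num)
      rwa [hone, mul_one] at this
    have h2 := ENNReal.tendsto_pow_atTop_nhds_zero_of_lt_one hr1
    exact le_antisymm (ge_of_tendsto' h2 h1) bot_le
  have hcov : E 𝔽 m n κ ⊆ ⋃ N : ℕ, ⋃ w : Fin m → Fin n → Fin N → 𝔽,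
      (E 𝔽 m n κ ∩ Ball (0 + memb (1 - N) N w) 1) := by
    intro A hA
    have hex : ∃ N : ℕ, A ∈ Ball 0 (1 - N) := by
      have : ∀ p : Fin m × Fin n, ∃ N : ℕ, G (1 - N) (A p.1 p.2) := by
        intro p
        refine ⟨(1 - (A p.1 p.2).order).toNat, ?_⟩
        intro l hl
        apply HahnSeries.coeff_eq_zero_of_lt_order
        omega
      choose N hN using this
      refine ⟨∑ p, N p, ?_⟩
      intro i j
      have h1 : N (i, j) ≤ ∑ p, N p := Finset.single_le_sum (fun _ _ => Nat.zero_le _) (Finset.mem_univ _)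
      have := G_mono (s := 1 - (∑ p, N p : ℕ)) (by omega) (hN (i, j))
      simpa using this
    obtain ⟨N, hN⟩ := hex
    rw [Ball_union 0 _ N] at hN
    obtain ⟨w, hw⟩ := Set.mem_iUnion.1 hN
    rw [sub_add_cancel] at hw
    exact Set.mem_iUnion.2 ⟨N, Set.mem_iUnion.2 ⟨w, hA, hw⟩⟩
  refine measure_mono_null hcov ?_
  rw [measure_iUnion_null_iff]
  intro N
  rw [measure_iUnion_null_iff]
  intro w
  exact hzero _

/-- **Theorem (Statement 13).** `𝔅(m,n)` is a null set for the Haar measure `μ` on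
`ℒ^(mn)` (normalized so that `μ(I^(mn)) = 1`). -/
theorem Bad_null (𝔽 : Type) [Field 𝔽] [Fintype 𝔽] (m n : ℕ) (hm : 0 < m) (hn : 0 < n)
    (μ : @Measure (Mat 𝔽 m n) (matSigma 𝔽 m n)) (hμ : IsHaarMat μ) :
    μ (Bad 𝔽 m n) = 0 := by
  refine measure_mono_null (Bad_sub hm hn) ?_
  rw [measure_iUnion_null_iff]
  exact fun κ => main hm hn μ hμ κ

end FSBad
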